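/- Let n ≥ 2 and n' = n/(n−1). There is a constant c depending only on n such that for every weight w with [w]_{A_{1,n'}} < ∞ and every f ∈ C_c^∞(ℝⁿ), ‖M_{n'}f‖_{L^{n',∞}(w^{n'}·dx)} ≤ c · [w]_{A_{1,n'}}^{2/n'} · ‖w |∇f|‖_{L^{1}(ℝⁿ)}, where M_{n'}f = (M(|f|^{n'}))^{1/n'}. -/

import Mathlib

/-!
Put `v = w^{n'}` and `K = [w]_{A_{1,n'}}`, so that `∫_Q v ≤ K |Q| essinf_Q v` on every cube
(`isA1_of_A1C`). The bound is the composition of two inequalities, each of which costs `K^{1/n'}`.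

* The maximal operator is of weak type `(1,1)` with respect to `v dx`, with constant `5ⁿ K`
  (`weak_type_maximal`, by a Vitali covering). Applied to `|f|^{n'}` it gives
  `‖M_{n'} f‖_{L^{n',∞}(v)} ≤ (5ⁿ K)^{1/n'} (∫ |f|^{n'} v)^{1/n'}`.
* The weighted Sobolev inequality `(∫ |f|^{n'} v)^{1/n'} ≤ C K^{1/n'} ∫ w |∇f|`
  (`weighted_sobolev`).

The Sobolev inequality is first proved in a weak form (`capacity_bound`): if `|φ| ≥ 1` on `E`, then
`v(E)^{1/n'} ≤ C K^{1/n'} ∫ w |∇φ|`. Indeed `|φ|` is at most a constant times the Riesz potential of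
`|∇φ|` (`riesz_bound`, polar coordinates), and after Fubini one has to bound
`∫_E |x - y|^{1-n} v(x) dx`. The pointwise `A₁` bound `v(B(y,r)) ≤ C K v(y) rⁿ`, valid for almost
every `y` and all `r` (`ae_ball_le`), puts the kernel in weak `L^{n'}(v)`, and Kolmogorov's
inequality
(`kolmogorov`) then yields `C (K v(y))^{1/n'} v(E)^{1/n}`. The weak form self-improves to the strong
one by applying it to smooth dyadic truncations of `f`, whose gradients live on the disjoint sets
`2^k ≤ |f| < 2^(k+1)`, and summing in `ℓ¹ ⊆ ℓ^{n'}`.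
-/

open MeasureTheory ENNReal Filter Set

noncomputable section

/-- `ℝⁿ` with the Euclidean structure. -/
abbrev En (n : ℕ) := EuclideanSpace ℝ (Fin n)

/-- Axis-parallel closed cube with corner `a` and side length `h`. -/
def cube {n : ℕ} (a : En n) (h : ℝ) : Set (En n) := {y | ∀ i, a i ≤ y i ∧ y i ≤ a i + h}

/-- Riesz potential of order `1` of a (nonnegative) function:
`I₁ g (x) = ∫ g(y) |x-y|^{-(n-1)} dy`. -/
def riesz (n : ℕ) (g : En n → ℝ) (x : En n) : ℝ≥0∞ :=
  ∫⁻ y, ENNReal.ofReal (g y) * ENNReal.ofReal (‖x - y‖ ^ (-((n : ℝ) - 1)))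

/-- The quantity `(∫ g^p dμ)^{1/p}` for an `ℝ≥0∞`-valued function `g`. -/
def lpNorm {α : Type*} [MeasurableSpace α] (p : ℝ) (g : α → ℝ≥0∞) (μ : Measure α) : ℝ≥0∞ :=
  (∫⁻ x, g x ^ p ∂μ) ^ (1 / p)

/-- Average `⨍_Q g` of an `ℝ≥0∞`-valued function over a set `Q`. -/
def avgE {n : ℕ} (g : En n → ℝ≥0∞) (Q : Set (En n)) : ℝ≥0∞ :=
  (volume Q)⁻¹ * ∫⁻ x in Q, g x

/-- The `A_{p,p*}` constant of a weight `w`; here `ps` plays the role of `p*` and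
`pp` that of `p' = p/(p-1)`:
`[w]_{A_{p,p*}} = sup_Q (⨍_Q w^{p*}) (⨍_Q w^{-p'})^{p*/p'}`. -/
def Apq (n : ℕ) (ps pp : ℝ) (w : En n → ℝ) : ℝ≥0∞ :=
  ⨆ (a : En n) (h : ℝ) (_ : 0 < h),
    avgE (fun x => ENNReal.ofReal (w x) ^ ps) (cube a h) *
      avgE (fun x => ENNReal.ofReal (w x) ^ (-pp)) (cube a h) ^ (ps / pp)

/-- The `A_{1,s}` constant of a weight `w`: the least `c` such that
`⨍_Q w^s ≤ c · essinf_Q w^s` for every cube `Q`. -/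
def A1C (n : ℕ) (s : ℝ) (w : En n → ℝ) : ℝ≥0∞ :=
  sInf {c : ℝ≥0∞ | ∀ (a : En n) (h : ℝ), 0 < h →
    avgE (fun x => ENNReal.ofReal (w x) ^ s) (cube a h) ≤
      c * essInf (fun x => ENNReal.ofReal (w x) ^ s) (volume.restrict (cube a h))}

/-- Hardy–Littlewood maximal operator over axis-parallel cubes containing `x`. -/
def maximal (n : ℕ) (g : En n → ℝ≥0∞) (x : En n) : ℝ≥0∞ :=
  ⨆ (a : En n) (h : ℝ) (_ : 0 < h) (_ : x ∈ cube a h), avgE g (cube a h)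

/-- Weak `L^s` quasinorm `sup_{t>0} t · μ{|g|>t}^{1/s}` of a real function. -/
def wnormR {α : Type*} [MeasurableSpace α] (s : ℝ) (g : α → ℝ) (μ : Measure α) : ℝ≥0∞ :=
  ⨆ (t : ℝ) (_ : 0 < t), ENNReal.ofReal t * μ {x | t < |g x|} ^ (1 / s)

/-- Weak `L^s` quasinorm of an `ℝ≥0∞`-valued function. -/
def wnormE {α : Type*} [MeasurableSpace α] (s : ℝ) (g : α → ℝ≥0∞) (μ : Measure α) : ℝ≥0∞ :=
  ⨆ (t : ℝ) (_ : 0 < t), ENNReal.ofReal t * μ {x | ENNReal.ofReal t < g x} ^ (1 / s)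

/-! ### Cubes and the `A₁` condition -/

lemma cube_eq_preimage {n : ℕ} (a : En n) (h : ℝ) :
    cube a h = (WithLp.ofLp : En n → (Fin n → ℝ)) ⁻¹'
      (Icc (WithLp.ofLp a) (fun i => a i + h)) := by
  ext y
  simp only [cube, mem_ofPred_eq, mem_preimage, mem_Icc, Pi.le_def]
  exact forall_and

lemma isClosed_cube {n : ℕ} (a : En n) (h : ℝ) : IsClosed (cube a h) := by
  rw [cube_eq_preimage]
  exact isClosed_Icc.preimage (PiLp.continuous_ofLp 2 _)

lemma measurableSet_cube {n : ℕ} (a : En n) (h : ℝ) : MeasurableSet (cube a h) :=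
  (isClosed_cube a h).measurableSet

lemma volume_cube {n : ℕ} (a : En n) (h : ℝ) : volume (cube a h) = ENNReal.ofReal h ^ n := by
  rw [cube_eq_preimage,
    (PiLp.volume_preserving_ofLp (Fin n)).measure_preimage measurableSet_Icc.nullMeasurableSet,
    Real.volume_Icc_pi]
  simp

lemma interior_cube_nonempty {n : ℕ} (a : En n) {h : ℝ} (hh : 0 < h) :
    (interior (cube a h)).Nonempty := by
  have hopen : IsOpen ((WithLp.ofLp : En n → (Fin n → ℝ)) ⁻¹'
      (Set.univ.pi fun i => Ioo (a i) (a i + h))) :=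
    (isOpen_set_pi finite_univ fun _ _ => isOpen_Ioo).preimage (PiLp.continuous_ofLp 2 _)
  refine ⟨WithLp.toLp 2 fun i => a i + h / 2, interior_maximal ?_ hopen ?_⟩
  · intro y hy i
    have := hy i (mem_univ i)
    exact ⟨this.1.le, this.2.le⟩
  · intro i _
    constructor <;> simp <;> linarith

lemma cube_subset_cube {n : ℕ} {a b : En n} {h k : ℝ} (h1 : ∀ i, b i ≤ a i)
    (h2 : ∀ i, a i + h ≤ b i + k) : cube a h ⊆ cube b k := fun _ hy i =>
  ⟨(h1 i).trans (hy i).1, (hy i).2.trans (h2 i)⟩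

lemma cube_nonempty {n : ℕ} (a : En n) {h : ℝ} (hh : 0 < h) : (cube a h).Nonempty :=
  (interior_cube_nonempty a hh).mono interior_subset

/-- The `A₁` condition `∫_Q v ≤ K |Q| essinf_Q v` on all cubes, for a density `v`. -/
def IsA1 (n : ℕ) (K : ℝ≥0∞) (v : En n → ℝ≥0∞) : Prop :=
  ∀ (a : En n) (h : ℝ), 0 < h →
    ∫⁻ x in cube a h, v x ≤
      K * ENNReal.ofReal h ^ n * essInf v (volume.restrict (cube a h))

lemma essInf_cube_ne_top {n : ℕ} {v : En n → ℝ≥0∞} (hv : ∀ x, v x ≠ ∞) (a : En n) {h : ℝ}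
    (hh : 0 < h) : essInf v (volume.restrict (cube a h)) ≠ ∞ := by
  intro hcon
  have h1 : ∀ᵐ y ∂(volume.restrict (cube a h)), False := by
    filter_upwards [ae_essInf_le (f := v) (μ := volume.restrict (cube a h))] with y hy
    rw [hcon, top_le_iff] at hy
    exact hv y hy
  rw [ae_iff] at h1
  simp [volume_cube] at h1
  linarith [h1.1]

/-- The infimum defining `A1C` is attained: `[w]_{A_{1,s}}` itself is an admissible constant. -/
lemma isA1_of_A1C (n : ℕ) {s : ℝ} (hs : 0 ≤ s) (w : En n → ℝ) (hfin : A1C n s w < ∞) :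
    IsA1 n (A1C n s w) (fun x => ENNReal.ofReal (w x) ^ s) := by
  intro a h hh
  set v := fun x => ENNReal.ofReal (w x) ^ s
  set m := essInf v (volume.restrict (cube a h))
  have hV0 : volume (cube a h) ≠ 0 := by rw [volume_cube]; simp [hh]
  have hVt : volume (cube a h) ≠ ∞ := by rw [volume_cube]; simp
  suffices H : avgE v (cube a h) ≤ A1C n s w * m by
    have := mul_le_mul_right H (volume (cube a h))
    rw [avgE, ← mul_assoc, ENNReal.mul_inv_cancel hV0 hVt, one_mul, volume_cube] at this
    calc _ ≤ _ := this
      _ = _ := by ring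
  obtain ⟨c0, hc0, -⟩ := sInf_lt_iff.1 hfin
  have hmt : m ≠ ∞ :=
    essInf_cube_ne_top (fun x => ENNReal.rpow_ne_top_of_nonneg hs ENNReal.ofReal_ne_top) a hh
  by_cases hm0 : m = 0
  · have := hc0 a h hh
    change avgE v (cube a h) ≤ c0 * m at this
    rw [hm0, mul_zero] at this ⊢
    exact this
  · rw [← ENNReal.div_le_iff hm0 hmt]
    refine le_sInf fun c hc => ?_
    rw [ENNReal.div_le_iff hm0 hmt]
    exact hc a h hh

/-! ### The maximal operator on an `A₁` measure -/

/-- Weak type `(1,1)` bound for the maximal operator with respect to an `A₁` measure, with linear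
dependence on the `A₁` constant. A Vitali subfamily `Q_j` of the cubes on which the average of `g`
exceeds `L` is disjoint and its fivefold dilates cover the superlevel set, while
`∫_{5Q} v ≤ 5ⁿ K |Q| essinf_Q v ≤ 5ⁿ K L⁻¹ ∫_Q g v`. -/
lemma weak_type_maximal {n : ℕ} (hn : 1 ≤ n) {K : ℝ≥0∞} {v : En n → ℝ≥0∞}
    (hK : IsA1 n K v) (g : En n → ℝ≥0∞) (hgm : Measurable g)
    (hg : ∫⁻ x, g x ≠ ∞) {L : ℝ≥0∞} (hL0 : L ≠ 0) (hLt : L ≠ ∞) :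
    L * (volume.withDensity v) {x | L < maximal n g x} ≤ 5 ^ n * K * ∫⁻ x, g x * v x := by
  set ν := volume.withDensity v
  set t : Set (En n × ℝ) := {p | 0 < p.2 ∧ L < avgE g (cube p.1 p.2)} with ht
  have hvol : ∀ p ∈ t, L * ENNReal.ofReal p.2 ^ n ≤ ∫⁻ x in cube p.1 p.2, g x := by
    rintro ⟨a, h⟩ ⟨hh, hlt⟩
    have h0 : volume (cube a h) ≠ 0 := by
      rw [volume_cube]
      simpa using fun h' => absurd hh h'.not_gt
    have h1 : volume (cube a h) ≠ ∞ := by rw [volume_cube]; simp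
    have := mul_le_mul_right hlt.le (volume (cube a h))
    simp only [avgE] at this
    rw [← mul_assoc, ENNReal.mul_inv_cancel h0 h1, one_mul, volume_cube, mul_comm] at this
    exact this
  have hbdd : ∀ p ∈ t, p.2 ≤ 1 + ((∫⁻ x, g x) / L).toReal := by
    intro p hp
    by_contra hcon
    push Not at hcon
    have hpos : 0 ≤ ((∫⁻ x, g x) / L).toReal := ENNReal.toReal_nonneg
    have h1 : ENNReal.ofReal p.2 ^ n ≤ (∫⁻ x, g x) / L := by
      rw [ENNReal.le_div_iff_mul_le (Or.inl hL0) (Or.inl hLt), mul_comm]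
      exact (hvol p hp).trans (setLIntegral_le_lintegral _ _)
    have hfin : (∫⁻ x, g x) / L ≠ ∞ := ENNReal.div_ne_top hg hL0
    have h2 : p.2 ^ n ≤ ((∫⁻ x, g x) / L).toReal := by
      rw [← ENNReal.ofReal_pow hp.1.le] at h1
      exact (ENNReal.ofReal_le_iff_le_toReal hfin).1 h1
    have h3 : p.2 ≤ p.2 ^ n := le_self_pow₀ (by linarith) (by omega)
    linarith
  obtain ⟨u, hut, hdisj, hcov⟩ := Vitali.exists_disjoint_subfamily_covering_enlargement
    (fun p : En n × ℝ => cube p.1 p.2) t (fun p => p.2) 2 one_lt_two (fun p hp => hp.1.le) _ hbdd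
    (fun p hp => cube_nonempty _ hp.1)
  have hucount : u.Countable := hdisj.countable_of_nonempty_interior
    fun p hp => interior_cube_nonempty _ (hut hp).1
  -- the fivefold concentric dilate of a cube
  let Q5 : En n × ℝ → Set (En n) := fun p =>
    cube (WithLp.toLp 2 fun i => p.1 i - 2 * p.2) (5 * p.2)
  have hsub : {x | L < maximal n g x} ⊆ ⋃ p ∈ u, Q5 p := by
    intro x hx
    simp only [mem_ofPred_eq, maximal, lt_iSup_iff] at hx
    obtain ⟨a, h, hh, hxa, hlt⟩ := hx
    obtain ⟨p, hpu, ⟨z, hz1, hz2⟩, hle⟩ := hcov (a, h) ⟨hh, hlt⟩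
    refine mem_iUnion₂.2 ⟨p, hpu, fun i => ?_⟩
    have a1 := hxa i
    have a2 := hz1 i
    have a3 := hz2 i
    simp only at a1 a2 a3 hle ⊢
    constructor <;> linarith
  have hone : ∀ p ∈ u, L * ν (Q5 p) ≤ 5 ^ n * K * ∫⁻ x in cube p.1 p.2, g x * v x := by
    intro p hp
    have hp2 : 0 < p.2 := (hut hp).1
    have hss : cube p.1 p.2 ⊆ Q5 p := cube_subset_cube
      (fun i => by simp; linarith) (fun i => by simp; linarith)
    set m := essInf v (volume.restrict (cube p.1 p.2)) with hm
    have hmono : essInf v (volume.restrict (Q5 p)) ≤ m :=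
      essInf_antitone_measure (Measure.absolutelyContinuous_of_le
        (Measure.restrict_mono_set volume hss))
    calc L * ν (Q5 p) = L * ∫⁻ x in Q5 p, v x := by
          rw [withDensity_apply _ (measurableSet_cube _ _)]
      _ ≤ L * (K * ENNReal.ofReal (5 * p.2) ^ n * essInf v (volume.restrict (Q5 p))) := by
          gcongr
          exact hK _ _ (by linarith)
      _ ≤ L * (K * ENNReal.ofReal (5 * p.2) ^ n * m) := by gcongr
      _ = 5 ^ n * K * ((L * ENNReal.ofReal p.2 ^ n) * m) := by
          rw [ENNReal.ofReal_mul (by norm_num), mul_pow]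
          simp only [ENNReal.ofReal_ofNat]
          ring
      _ ≤ 5 ^ n * K * ((∫⁻ x in cube p.1 p.2, g x) * m) := by
          gcongr
          exact hvol p (hut hp)
      _ = 5 ^ n * K * (∫⁻ x in cube p.1 p.2, g x * m) := by
          rw [lintegral_mul_const _ hgm]
      _ ≤ _ := by
          gcongr 5 ^ n * K * ?_
          refine lintegral_mono_ae ?_
          filter_upwards [ae_essInf_le (f := v) (μ := volume.restrict (cube p.1 p.2))] with y hy
          gcongr
  have : Countable u := hucount
  calc L * ν {x | L < maximal n g x} ≤ L * ∑' p : u, ν (Q5 p) := by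
        gcongr
        rw [biUnion_eq_iUnion] at hsub
        exact (measure_mono hsub).trans (measure_iUnion_le _)
    _ = ∑' p : u, L * ν (Q5 p) := ENNReal.tsum_mul_left.symm
    _ ≤ ∑' p : u, 5 ^ n * K * ∫⁻ x in cube p.1.1 p.1.2, g x * v x :=
        ENNReal.tsum_le_tsum fun p => hone p p.2
    _ = 5 ^ n * K * ∑' p : u, ∫⁻ x in cube p.1.1 p.1.2, g x * v x := ENNReal.tsum_mul_left
    _ = 5 ^ n * K * ∫⁻ x in ⋃ p : u, cube p.1.1 p.1.2, g x * v x := by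
        rw [lintegral_iUnion (fun p => measurableSet_cube _ _)]
        intro p q hpq
        exact hdisj p.2 q.2 (fun h => hpq (Subtype.ext h))
    _ ≤ _ := by
        gcongr
        exact Measure.restrict_le_self

/-! ### Balls and the pointwise `A₁` bound -/

lemma abs_coord_le_norm {n : ℕ} (x : En n) (i : Fin n) : |x i| ≤ ‖x‖ := by
  simpa using PiLp.norm_apply_le x i

/-- Pointwise form of the `A₁` condition. A single null set serves all radii because it suffices to
test cubes with corner in a countable dense set and rational side. -/
lemma ae_ball_le {n : ℕ} {K : ℝ≥0∞} {v : En n → ℝ≥0∞} (hK : IsA1 n K v) :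
    ∀ᵐ y : En n, ∀ r : ℝ, 0 < r →
      (volume.withDensity v) (Metric.closedBall y r) ≤
        4 ^ n * K * v y * ENNReal.ofReal r ^ n := by
  have key : ∀ᵐ y : En n, ∀ (k : ℕ) (q : ℚ),
      y ∈ cube (TopologicalSpace.denseSeq (En n) k) (q : ℝ) →
      essInf v (volume.restrict (cube (TopologicalSpace.denseSeq (En n) k) (q : ℝ))) ≤ v y := by
    rw [ae_all_iff]
    intro k
    rw [ae_all_iff]
    intro q
    rw [← ae_restrict_iff' (measurableSet_cube _ _)]
    exact ae_essInf_le
  filter_upwards [key] with y hy r hr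
  obtain ⟨q, hq1, hq2⟩ := exists_rat_btwn (show 3 * r < 4 * r by linarith)
  have hq0 : (0 : ℝ) < q := by linarith
  obtain ⟨k, hk⟩ := (TopologicalSpace.denseRange_denseSeq (En n)).exists_dist_lt
    (WithLp.toLp 2 fun i => y i - (3 / 2) * r : En n) (show 0 < r / 2 by linarith)
  set a := TopologicalSpace.denseSeq (En n) k
  have hai : ∀ i, |y i - (3 / 2) * r - a i| < r / 2 := by
    intro i
    rw [dist_eq_norm] at hk
    have := (abs_coord_le_norm _ i).trans_lt hk
    simpa using this
  have hsub : Metric.closedBall y r ⊆ cube a q := by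
    intro x hx i
    rw [Metric.mem_closedBall, dist_eq_norm] at hx
    have h1 : |x i - y i| ≤ r := by simpa using (abs_coord_le_norm _ i).trans hx
    have h2 := abs_lt.1 (hai i)
    have h3 := abs_le.1 h1
    constructor <;> linarith
  calc (volume.withDensity v) (Metric.closedBall y r) ≤ (volume.withDensity v) (cube a q) :=
        measure_mono hsub
    _ = ∫⁻ x in cube a q, v x := withDensity_apply _ (measurableSet_cube _ _)
    _ ≤ K * ENNReal.ofReal q ^ n * essInf v (volume.restrict (cube a q)) := hK _ _ hq0
    _ ≤ K * ENNReal.ofReal (4 * r) ^ n * v y := by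
        gcongr
        exact hy k q (hsub (Metric.mem_closedBall_self hr.le))
    _ = _ := by
        rw [ENNReal.ofReal_mul (by norm_num), mul_pow]
        simp only [ENNReal.ofReal_ofNat]
        ring

/-! ### Kolmogorov's inequality -/

/-- Kolmogorov's inequality: a function in weak `L^s(μ)`, `s > 1`, is integrable on sets of finite
measure, with the natural bound. The layer-cake integral is split at the height `T` where the two
bounds `μ E` and `A T^{-s}` agree. -/
lemma kolmogorov {α : Type*} [MeasurableSpace α] (μ : Measure α) (E : Set α) (hE : μ E ≠ ∞)
    {s : ℝ} (hs : 1 < s) {A : ℝ≥0∞} (hA : A ≠ ∞) (g : α → ℝ) (hgm : Measurable g)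
    (hg0 : ∀ x, 0 ≤ g x)
    (hg : ∀ t : ℝ, 0 < t → μ {x | t < g x} ≤ A * ENNReal.ofReal (t ^ (-s))) :
    ∫⁻ x in E, ENNReal.ofReal (g x) ∂μ ≤
      ENNReal.ofReal (s / (s - 1)) * A ^ (1 / s) * μ E ^ (1 - 1 / s) := by
  rw [lintegral_eq_lintegral_meas_lt _ (Eventually.of_forall hg0) hgm.aemeasurable]
  have hs0 : 0 < s := by linarith
  by_cases hA0 : A = 0
  · rw [setLIntegral_congr_fun (g := fun _ => 0) measurableSet_Ioi]
    · simp
    · intro t ht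
      have := (Measure.restrict_apply_le E {x | t < g x}).trans (hg t ht)
      simpa [hA0] using this
  by_cases hV0 : μ E = 0
  · rw [Measure.restrict_eq_zero.2 hV0]
    simp
  obtain ⟨a, rfl⟩ : ∃ a : ℝ, A = ENNReal.ofReal a := ⟨A.toReal, (ENNReal.ofReal_toReal hA).symm⟩
  obtain ⟨V, hV⟩ : ∃ a : ℝ, μ E = ENNReal.ofReal a :=
    ⟨(μ E).toReal, (ENNReal.ofReal_toReal hE).symm⟩
  have ha : 0 < a := by simpa using hA0
  have hVpos : 0 < V := by simpa [hV] using hV0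
  set T : ℝ := (a / V) ^ (1 / s) with hT
  have hTpos : 0 < T := by positivity
  have hI1 : ∫⁻ t in Ioc 0 T, (μ.restrict E) {x | t < g x} ≤ ENNReal.ofReal (V * T) := by
    calc _ ≤ ∫⁻ t in Ioc 0 T, ENNReal.ofReal V := by
          refine lintegral_mono fun t => ?_
          rw [← hV]
          exact (measure_mono (subset_univ _)).trans (by simp)
      _ = _ := by
          rw [setLIntegral_const, Real.volume_Ioc, sub_zero, ENNReal.ofReal_mul hVpos.le]
  have hI2 : ∫⁻ t in Ioi T, (μ.restrict E) {x | t < g x} ≤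
      ENNReal.ofReal (a * (T ^ (1 - s) / (s - 1))) := by
    calc _ ≤ ∫⁻ t in Ioi T, ENNReal.ofReal a * ENNReal.ofReal (t ^ (-s)) := by
          refine setLIntegral_mono' measurableSet_Ioi fun t ht => ?_
          exact (Measure.restrict_apply_le E _).trans (hg t (hTpos.trans ht))
      _ = ENNReal.ofReal a * ∫⁻ t in Ioi T, ENNReal.ofReal (t ^ (-s)) := by
          rw [lintegral_const_mul' _ _ ENNReal.ofReal_ne_top]
      _ = _ := by
          rw [← ofReal_integral_eq_lintegral_ofReal
            (integrableOn_Ioi_rpow_of_lt (by linarith) hTpos),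
            integral_Ioi_rpow_of_lt (by linarith) hTpos, ENNReal.ofReal_mul ha.le]
          · congr 2
            rw [show -s + 1 = 1 - s by ring, show 1 - s = -(s - 1) by ring, neg_div_neg_eq]
          · filter_upwards [ae_restrict_mem measurableSet_Ioi] with t ht
            exact Real.rpow_nonneg (hTpos.trans ht).le _
  rw [← Ioc_union_Ioi_eq_Ioi hTpos.le]
  refine (lintegral_union_le _ _ _).trans ((add_le_add hI1 hI2).trans_eq ?_)
  have e1 : V * T = a ^ (1 / s) * V ^ (1 - 1 / s) := by
    rw [hT, Real.div_rpow ha.le hVpos.le, Real.rpow_sub hVpos, Real.rpow_one]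
    ring
  have e2 : a * T ^ (1 - s) = a ^ (1 / s) * V ^ (1 - 1 / s) := by
    rw [← e1, Real.rpow_sub hTpos, Real.rpow_one, hT, ← Real.rpow_mul (by positivity),
      one_div_mul_cancel hs0.ne', Real.rpow_one]
    field_simp
  rw [hV, ENNReal.ofReal_rpow_of_pos ha, ENNReal.ofReal_rpow_of_pos hVpos,
    ← ENNReal.ofReal_mul (div_nonneg hs0.le (by linarith)),
    ← ENNReal.ofReal_mul (mul_nonneg (div_nonneg hs0.le (by linarith)) (by positivity)),
    ← ENNReal.ofReal_add (by positivity)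
      (mul_nonneg ha.le (div_nonneg (by positivity) (by linarith)))]
  congr 1
  rw [mul_div_assoc', e2, e1]
  have : s - 1 ≠ 0 := by linarith
  field_simp
  ring

/-! ### Bound by the Riesz potential of the gradient -/

lemma ray_bound {n : ℕ} (φ : En n → ℝ) (hφ : ContDiff ℝ 1 φ) (hc : HasCompactSupport φ)
    (x θ : En n) (hθ : ‖θ‖ = 1) :
    ‖φ x‖ₑ ≤ ∫⁻ r in Ioi (0 : ℝ), ‖fderiv ℝ φ (x + r • θ)‖ₑ := by
  have hiso : Isometry (fun r : ℝ => x + r • θ) := by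
    refine Isometry.of_dist_eq fun r r' => ?_
    rw [dist_add_left, dist_eq_norm, ← sub_smul, norm_smul, hθ, mul_one, dist_eq_norm]
  have hline : ContDiff ℝ 1 (fun r : ℝ => x + r • θ) := by fun_prop
  have hu : ContDiff ℝ 1 (fun r : ℝ => φ (x + r • θ)) := hφ.comp hline
  have hcu : HasCompactSupport (fun r : ℝ => φ (x + r • θ)) :=
    hc.comp_isClosedEmbedding hiso.isClosedEmbedding
  have h1 := hcu.integral_Ioi_deriv_eq hu 0
  have h2 := enorm_integral_le_lintegral_enorm (μ := volume.restrict (Ioi (0 : ℝ)))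
    (deriv (fun r : ℝ => φ (x + r • θ)))
  rw [h1] at h2
  simp only [zero_smul, add_zero, enorm_neg] at h2
  refine h2.trans (lintegral_mono fun r => ?_)
  have hd : HasDerivAt (fun r : ℝ => x + r • θ) θ r := by
    simpa using ((hasDerivAt_id r).smul_const θ).const_add x
  have := ((hφ.differentiable one_ne_zero (x + r • θ)).hasFDerivAt.comp_hasDerivAt r hd).deriv
  change deriv (fun r : ℝ => φ (x + r • θ)) r = _ at this
  rw [this]
  refine ((fderiv ℝ φ (x + r • θ)).le_opENorm θ).trans ?_
  rw [← ofReal_norm θ, hθ]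
  simp

/-- Pointwise bound of a `C¹` compactly supported function by the Riesz potential of its gradient:
integrate `|φ(x)| ≤ ∫₀^∞ |∇φ(x + rθ)| dr` over the unit sphere. -/
lemma riesz_bound {n : ℕ} (hn : 1 ≤ n) (φ : En n → ℝ) (hφ : ContDiff ℝ 1 φ)
    (hc : HasCompactSupport φ) (x : En n) :
    (volume : Measure (En n)).toSphere univ * ‖φ x‖ₑ ≤
      ∫⁻ y, ‖fderiv ℝ φ y‖ₑ * ENNReal.ofReal ((‖x - y‖ ^ (n - 1))⁻¹) := by
  have : Nonempty (Fin n) := ⟨⟨0, hn⟩⟩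
  set F : En n → ℝ≥0∞ := fun z => ‖fderiv ℝ φ (x + z)‖ₑ * ENNReal.ofReal ((‖z‖ ^ (n - 1))⁻¹)
    with hF
  have hcont : Continuous (fun z => fderiv ℝ φ (x + z)) :=
    (hφ.continuous_fderiv one_ne_zero).comp (continuous_const.add continuous_id)
  have hFm : Measurable F := by
    have := hcont.measurable
    fun_prop
  have e0 : ∫⁻ y, ‖fderiv ℝ φ y‖ₑ * ENNReal.ofReal ((‖x - y‖ ^ (n - 1))⁻¹) = ∫⁻ z, F z := by
    rw [← lintegral_add_left_eq_self (μ := volume) _ x]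
    simp [hF]
  have e1 : ∫⁻ z, F z = ∫⁻ p, F (p.2.1 • p.1.1)
      ∂((volume : Measure (En n)).toSphere.prod (Measure.volumeIoiPow (n - 1))) := by
    rw [← restrict_compl_singleton (μ := (volume : Measure (En n))) 0,
      ← lintegral_subtype_comap (measurableSet_singleton _).compl]
    have hmp := (volume : Measure (En n)).measurePreserving_homeomorphUnitSphereProd
    rw [finrank_euclideanSpace_fin] at hmp
    have h := hmp.lintegral_comp_emb (Homeomorph.measurableEmbedding _)
      (fun p => F (p.2.1 • p.1.1))
    rw [restrict_compl_singleton, ← h]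
    refine lintegral_congr fun z => ?_
    congr 1
    have hz : ‖(z : En n)‖ ≠ 0 := norm_ne_zero_iff.2 z.2
    simp [smul_smul, hz]
  have hFm2 : Measurable (fun p : Metric.sphere (0 : En n) 1 × Ioi (0 : ℝ) =>
      F (p.2.1 • p.1.1)) := by
    fun_prop
  rw [e0, e1, lintegral_prod _ hFm2.aemeasurable, mul_comm, ← lintegral_const]
  refine lintegral_mono fun θ => ?_
  have hθ : ‖(θ : En n)‖ = 1 := by simp
  refine (ray_bound φ hφ hc x θ hθ).trans_eq ?_
  have hFm3 : Measurable (fun r : Ioi (0 : ℝ) => F (r.1 • θ.1)) := by fun_prop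
  rw [Measure.volumeIoiPow, lintegral_withDensity_eq_lintegral_mul _ (by fun_prop) hFm3,
    ← lintegral_subtype_comap measurableSet_Ioi]
  refine lintegral_congr fun r => ?_
  have hr : (0 : ℝ) < r.1 := r.2
  simp only [Pi.mul_apply, hF, norm_smul, hθ, mul_one, Real.norm_of_nonneg hr.le]
  rw [mul_left_comm, ← ENNReal.ofReal_mul (by positivity), mul_inv_cancel₀ (by positivity)]
  simp

/-! ### Weighted capacity estimate -/

/-- If balls centred at `y` satisfy `μ(B(y,r)) ≤ A rⁿ`, then `|x - y|^{1-n}` is in weak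
`L^{n'}(μ)`: the set where it exceeds `t` lies in the ball of radius `t^{-1/(n-1)}`. -/
lemma kernel_superlevel {n : ℕ} (hn : 2 ≤ n) (μ : Measure (En n)) (y : En n) (A : ℝ≥0∞)
    (hA : ∀ r : ℝ, 0 < r → μ (Metric.closedBall y r) ≤ A * ENNReal.ofReal r ^ n)
    (t : ℝ) (ht : 0 < t) :
    μ {x | t < (‖x - y‖ ^ (n - 1))⁻¹} ≤ A * ENNReal.ofReal (t ^ (-((n : ℝ) / (n - 1)))) := by
  have hn1 : (0 : ℝ) < (n : ℝ) - 1 := by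
    have : (2 : ℝ) ≤ n := by exact_mod_cast hn
    linarith
  have hcast : ((n - 1 : ℕ) : ℝ) = (n : ℝ) - 1 := by rw [Nat.cast_sub (by omega)]; simp
  set r : ℝ := t ^ (-(1 / ((n : ℝ) - 1))) with hr
  have hrpos : 0 < r := by positivity
  have hrpow : r ^ (n - 1) = t⁻¹ := by
    rw [hr, ← Real.rpow_natCast, hcast, ← Real.rpow_mul ht.le, neg_mul,
      one_div_mul_cancel hn1.ne', Real.rpow_neg_one]
  have hrn : r ^ n = t ^ (-((n : ℝ) / (n - 1))) := by
    rw [hr, ← Real.rpow_natCast, ← Real.rpow_mul ht.le]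
    congr 1
    ring
  have hsub : {x | t < (‖x - y‖ ^ (n - 1))⁻¹} ⊆ Metric.closedBall y r := by
    intro x hx
    rw [Metric.mem_closedBall, dist_eq_norm]
    have hx' : t < (‖x - y‖ ^ (n - 1))⁻¹ := hx
    have hpos : 0 < ‖x - y‖ ^ (n - 1) := inv_pos.1 (ht.trans hx')
    have h1 : ‖x - y‖ ^ (n - 1) < r ^ (n - 1) := by
      rw [hrpow]
      exact (lt_inv_comm₀ ht hpos).1 hx'
    exact (lt_of_pow_lt_pow_left₀ _ hrpos.le h1).le
  calc _ ≤ μ (Metric.closedBall y r) := measure_mono hsub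
    _ ≤ A * ENNReal.ofReal r ^ n := hA r hrpos
    _ = _ := by rw [← ENNReal.ofReal_pow hrpos.le, hrn]

/-- Weighted capacity estimate: if `|φ| ≥ 1` on `E`, then `ν(E)^{1/n'}` is controlled by the
weighted `L¹` norm of `∇φ`. Integrating the Riesz potential bound over `E` against `ν` and
exchanging the integrals leaves `∫_E |x-y|^{1-n} dν(x)`, which Kolmogorov's inequality bounds by
`n (4ⁿ K v(y))^{1/n'} ν(E)^{1/n}`. -/
lemma capacity_bound {n : ℕ} (hn : 2 ≤ n) {K : ℝ≥0∞} (hKt : K ≠ ∞) {v : En n → ℝ≥0∞}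
    (hvt : ∀ y, v y ≠ ∞) (hK : IsA1 n K v) {s : ℝ} (hs : s = (n : ℝ) / (n - 1))
    (φ : En n → ℝ) (hφ : ContDiff ℝ 1 φ) (hc : HasCompactSupport φ) (E : Set (En n))
    (hEm : MeasurableSet E) (hE : (volume.withDensity v) E ≠ ∞) (hφE : ∀ x ∈ E, 1 ≤ ‖φ x‖ₑ) :
    (volume : Measure (En n)).toSphere univ * (volume.withDensity v) E ^ (1 / s) ≤
      ENNReal.ofReal n * (4 ^ n * K) ^ (1 / s) * ∫⁻ y, ‖fderiv ℝ φ y‖ₑ * v y ^ (1 / s) := by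
  have hn1 : (0 : ℝ) < (n : ℝ) - 1 := by
    have : (2 : ℝ) ≤ n := by exact_mod_cast hn
    linarith
  have hs1 : 1 < s := by rw [hs, lt_div_iff₀ hn1]; linarith
  have hsn : s / (s - 1) = n := by
    rw [hs]
    field_simp
    ring
  set ν := volume.withDensity v with hν
  set σ := (volume : Measure (En n)).toSphere univ
  have hspos : 0 < s := by linarith
  have h1s : 0 < 1 - 1 / s := by
    rw [sub_pos, div_lt_one hspos]; exact hs1
  by_cases hV0 : ν E = 0
  · rw [hV0, ENNReal.zero_rpow_of_pos (by positivity), mul_zero]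
    exact bot_le
  have hdφ : Continuous (fderiv ℝ φ) := hφ.continuous_fderiv one_ne_zero
  have hmain : σ * ν E ≤ (ENNReal.ofReal n * (4 ^ n * K) ^ (1 / s) *
      ∫⁻ y, ‖fderiv ℝ φ y‖ₑ * v y ^ (1 / s)) * ν E ^ (1 - 1 / s) := by
    have hconst : ENNReal.ofReal n * (4 ^ n * K) ^ (1 / s) * ν E ^ (1 - 1 / s) ≠ ∞ :=
      ENNReal.mul_ne_top (ENNReal.mul_ne_top ENNReal.ofReal_ne_top
        (ENNReal.rpow_ne_top_of_nonneg (by positivity)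
          (ENNReal.mul_ne_top (by simp) hKt)))
        (ENNReal.rpow_ne_top_of_nonneg h1s.le hE)
    calc σ * ν E = ∫⁻ _ in E, σ ∂ν := (setLIntegral_const _ _).symm
      _ ≤ ∫⁻ x in E, (∫⁻ y, ‖fderiv ℝ φ y‖ₑ * ENNReal.ofReal ((‖x - y‖ ^ (n - 1))⁻¹)) ∂ν := by
          refine setLIntegral_mono' hEm fun x hx => ?_
          refine le_trans ?_ (riesz_bound (by omega) φ hφ hc x)
          calc σ = σ * 1 := (mul_one _).symm
            _ ≤ _ := by gcongr; exact hφE x hx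
      _ = ∫⁻ y, (∫⁻ x in E, ‖fderiv ℝ φ y‖ₑ * ENNReal.ofReal ((‖x - y‖ ^ (n - 1))⁻¹) ∂ν) := by
          refine lintegral_lintegral_swap (Measurable.aemeasurable ?_)
          have h2 : Measurable (fun p : En n × En n => fderiv ℝ φ p.2) :=
            (hdφ.comp continuous_snd).measurable
          simp only [Function.uncurry_def]
          fun_prop
      _ = ∫⁻ y, ‖fderiv ℝ φ y‖ₑ *
            (∫⁻ x in E, ENNReal.ofReal ((‖x - y‖ ^ (n - 1))⁻¹) ∂ν) := by
          refine lintegral_congr fun y => ?_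
          rw [lintegral_const_mul' _ _ enorm_ne_top]
      _ ≤ ∫⁻ y, (ENNReal.ofReal n * (4 ^ n * K) ^ (1 / s) * ν E ^ (1 - 1 / s)) *
            (‖fderiv ℝ φ y‖ₑ * v y ^ (1 / s)) := by
          refine lintegral_mono_ae ?_
          filter_upwards [ae_ball_le hK] with y hy
          have hker := kolmogorov ν E hE hs1 (A := 4 ^ n * K * v y)
            (ENNReal.mul_ne_top (ENNReal.mul_ne_top (by simp) hKt) (hvt y))
            (fun x => (‖x - y‖ ^ (n - 1))⁻¹) (by fun_prop) (fun x => by positivity)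
            (fun t ht => by rw [hs]; exact kernel_superlevel hn ν y _ hy t ht)
          rw [hsn, ENNReal.mul_rpow_of_nonneg _ _ (by positivity : 0 ≤ 1 / s)] at hker
          calc _ ≤ _ := mul_le_mul_right hker _
            _ = _ := by ring
      _ = _ := by
          rw [lintegral_const_mul' _ _ hconst]
          ring
  have hp0 : ν E ^ (1 - 1 / s) ≠ 0 := by
    simp [ENNReal.rpow_eq_zero_iff, hV0, hE]
  have hpt : ν E ^ (1 - 1 / s) ≠ ∞ := ENNReal.rpow_ne_top_of_nonneg h1s.le hE
  refine (ENNReal.mul_le_mul_iff_left hp0 hpt).1 ?_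
  refine le_trans (le_of_eq ?_) hmain
  rw [mul_assoc, ← ENNReal.rpow_add _ _ hV0 hE]
  simp

/-! ### Dyadic truncation -/

/-- The embedding `ℓ¹ ⊆ ℓˢ`. -/
lemma tsum_rpow_le_rpow_tsum {ι : Type*} (b : ι → ℝ≥0∞) {s : ℝ} (hs : 1 ≤ s) :
    ∑' i, b i ^ s ≤ (∑' i, b i) ^ s := by
  have hsplit : ∀ c : ℝ≥0∞, c ^ s = c * c ^ (s - 1) := by
    intro c
    conv_rhs => rw [← ENNReal.rpow_one c, ← ENNReal.rpow_mul, one_mul]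
    rw [← ENNReal.rpow_add_of_nonneg _ _ zero_le_one (by linarith)]
    congr 1
    ring
  rw [hsplit (∑' i, b i), ← ENNReal.tsum_mul_right]
  refine ENNReal.tsum_le_tsum fun i => ?_
  rw [hsplit]
  gcongr
  exact ENNReal.le_tsum i

/-- A smooth even cutoff of the real line, equal to `0` for `u² ≤ 2` and to `1` for `u² ≥ 3`. -/
def cutoff (u : ℝ) : ℝ := Real.smoothTransition (u ^ 2 - 2)

lemma cutoff_contDiff : ContDiff ℝ 1 cutoff := by
  have h : ContDiff ℝ 1 Real.smoothTransition := Real.smoothTransition.contDiff (n := 1)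
  exact h.comp (by fun_prop)

lemma cutoff_eq_one {u : ℝ} (hu : 2 ≤ |u|) : cutoff u = 1 := by
  apply Real.smoothTransition.one_of_one_le
  rw [← sq_abs]
  nlinarith

lemma cutoff_zero : cutoff 0 = 0 := by
  apply Real.smoothTransition.zero_of_nonpos
  norm_num

lemma deriv_cutoff_eq_zero {u : ℝ} (hu : ¬ (1 ≤ |u| ∧ |u| < 2)) : deriv cutoff u = 0 := by
  rw [not_and_or, not_le, not_lt] at hu
  rcases hu with hu | hu
  · have : cutoff =ᶠ[nhds u] fun _ => 0 := by
      filter_upwards [(isOpen_lt continuous_abs continuous_const).mem_nhds hu] with z hz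
      apply Real.smoothTransition.zero_of_nonpos
      have hz' : |z| < 1 := hz
      rw [← sq_abs]
      nlinarith [abs_nonneg z]
    rw [this.deriv_eq]
    simp
  · have hu' : (9 / 5 : ℝ) < |u| := by linarith
    have : cutoff =ᶠ[nhds u] fun _ => 1 := by
      filter_upwards [(isOpen_lt continuous_const continuous_abs).mem_nhds hu'] with z hz
      apply Real.smoothTransition.one_of_one_le
      have hz' : (9 / 5 : ℝ) < |z| := hz
      rw [← sq_abs]
      nlinarith
    rw [this.deriv_eq]
    simp

lemma exists_deriv_cutoff_bound : ∃ D : ℝ, 0 < D ∧ ∀ u, ‖deriv cutoff u‖ ≤ D := by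
  have hcont : Continuous (deriv cutoff) := cutoff_contDiff.continuous_deriv le_rfl
  have hsupp : HasCompactSupport (deriv cutoff) := by
    refine HasCompactSupport.intro (isCompact_Icc (a := (-2 : ℝ)) (b := 2)) fun u hu => ?_
    apply deriv_cutoff_eq_zero
    rintro ⟨-, h2⟩
    exact hu ⟨(abs_lt.1 h2).1.le, (abs_lt.1 h2).2.le⟩
  obtain ⟨D, hD⟩ := hsupp.exists_bound_of_continuous hcont
  exact ⟨max D 1, by positivity, fun u => (hD u).trans (le_max_left _ _)⟩

/-- The dyadic truncation of `f` between the heights `2^k` and `2^(k+1)` has gradient supported in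
`2^k ≤ |f| < 2^(k+1)`, of size at most `D 2^{-k} |∇f|`, where `D` bounds the derivative
of the cutoff. -/
lemma enorm_fderiv_truncation {n : ℕ} (f : En n → ℝ) (hf : ContDiff ℝ 1 f) {D : ℝ}
    (hD : ∀ u, ‖deriv cutoff u‖ ≤ D) (k : ℤ) (y : En n) :
    ‖fderiv ℝ (fun x => cutoff ((2 : ℝ) ^ (-k) * f x)) y‖ₑ ≤
      {x | (2 : ℝ) ^ k ≤ |f x| ∧ |f x| < 2 ^ (k + 1)}.indicator
        (fun x => ENNReal.ofReal D * ENNReal.ofReal ((2 : ℝ) ^ (-k)) * ‖fderiv ℝ f x‖ₑ) y := by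
  have h2k : (0 : ℝ) < 2 ^ (-k) := by positivity
  have h2k' : (0 : ℝ) < 2 ^ k := by positivity
  have hd : HasFDerivAt (fun x => (2 : ℝ) ^ (-k) * f x) ((2 : ℝ) ^ (-k) • fderiv ℝ f y) y :=
    (hf.differentiable one_ne_zero y).hasFDerivAt.const_mul _
  have hc : HasDerivAt cutoff (deriv cutoff ((2 : ℝ) ^ (-k) * f y)) ((2 : ℝ) ^ (-k) * f y) :=
    (cutoff_contDiff.differentiable one_ne_zero _).hasDerivAt
  have hcomp := (hc.comp_hasFDerivAt y hd).fderiv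
  change fderiv ℝ (fun x => cutoff ((2 : ℝ) ^ (-k) * f x)) y = _ at hcomp
  rw [hcomp]
  by_cases hy : (2 : ℝ) ^ k ≤ |f y| ∧ |f y| < 2 ^ (k + 1)
  · rw [indicator_of_mem (by exact hy), enorm_smul, enorm_smul, ← mul_assoc]
    gcongr
    · rw [← ofReal_norm]
      exact ENNReal.ofReal_le_ofReal (hD _)
    · rw [← ofReal_norm, Real.norm_of_nonneg h2k.le]
  · rw [deriv_cutoff_eq_zero]
    · rw [zero_smul, ← ofReal_norm, norm_zero, ENNReal.ofReal_zero]
      exact bot_le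
    · rintro ⟨h1, h2⟩
      apply hy
      rw [abs_mul, abs_of_pos h2k, zpow_neg] at h1 h2
      rw [inv_mul_eq_div, le_div_iff₀ h2k', one_mul] at h1
      rw [inv_mul_eq_div, div_lt_iff₀ h2k'] at h2
      refine ⟨h1, ?_⟩
      rw [zpow_add_one₀ two_ne_zero]
      linarith

lemma exists_dyadic {u : ℝ} (hu : u ≠ 0) : ∃ k : ℤ, (2 : ℝ) ^ k ≤ |u| ∧ |u| < 2 ^ (k + 1) :=
  exists_mem_Ico_zpow (abs_pos.2 hu) one_lt_two

lemma withDensity_compact_ne_top {n : ℕ} {K : ℝ≥0∞} (hKt : K ≠ ∞) {v : En n → ℝ≥0∞}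
    (hvt : ∀ y, v y ≠ ∞) (hK : IsA1 n K v) {S : Set (En n)} (hS : IsCompact S) :
    (volume.withDensity v) S ≠ ∞ := by
  obtain ⟨R, hR⟩ := hS.isBounded.subset_closedBall 0
  have hsub : S ⊆ cube (WithLp.toLp 2 fun _ => -|R|) (2 * |R| + 1) := by
    intro x hx i
    have h1 : ‖x‖ ≤ R := by simpa using hR hx
    have h2 := abs_le.1 ((abs_coord_le_norm x i).trans h1)
    have := le_abs_self R
    simp only
    constructor <;> linarith
  refine ne_top_of_le_ne_top ?_ (measure_mono hsub)
  rw [withDensity_apply _ (measurableSet_cube _ _)]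
  have hpos : 0 < 2 * |R| + 1 := by positivity
  refine ne_top_of_le_ne_top ?_ (hK _ _ hpos)
  exact ENNReal.mul_ne_top (ENNReal.mul_ne_top hKt (by simp)) (essInf_cube_ne_top hvt _ hpos)

/-! ### Weighted Sobolev inequality -/

/-- Weighted Gagliardo–Nirenberg–Sobolev inequality for `A₁` densities, by Maz'ya's truncation
argument: the capacity estimate on each dyadic truncation of `f` only sees the part of the gradient
in `2^k ≤ |f| < 2^(k+1)`, so the estimates add up. -/
lemma weighted_sobolev {n : ℕ} (hn : 2 ≤ n) {K : ℝ≥0∞} (hKt : K ≠ ∞) {v : En n → ℝ≥0∞}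
    (hvm : AEMeasurable v) (hvt : ∀ y, v y ≠ ∞) (hK : IsA1 n K v) {s : ℝ}
    (hs : s = (n : ℝ) / (n - 1)) {D : ℝ} (hD : ∀ u, ‖deriv cutoff u‖ ≤ D)
    (f : En n → ℝ) (hf : ContDiff ℝ 1 f) (hc : HasCompactSupport f) :
    (volume : Measure (En n)).toSphere univ *
        (∫⁻ x, ENNReal.ofReal (|f x| ^ s) * v x) ^ (1 / s) ≤
      4 * (ENNReal.ofReal n * (4 ^ n * K) ^ (1 / s)) * ENNReal.ofReal D *
        ∫⁻ y, ‖fderiv ℝ f y‖ₑ * v y ^ (1 / s) := by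
  have hn1 : (0 : ℝ) < (n : ℝ) - 1 := by
    have : (2 : ℝ) ≤ n := by exact_mod_cast hn
    linarith
  have hs1 : 1 < s := by rw [hs, lt_div_iff₀ hn1]; linarith
  have hspos : 0 < s := by linarith
  set ν := volume.withDensity v with hν
  set σ := (volume : Measure (En n)).toSphere univ
  set C := ENNReal.ofReal n * (4 ^ n * K) ^ (1 / s) with hC
  have hfc : Continuous f := hf.continuous
  have habs : Measurable fun x => |f x| := hfc.abs.measurable
  -- dyadic layers and superlevel sets of `|f|`
  let S : ℤ → Set (En n) := fun k => {x | (2 : ℝ) ^ k ≤ |f x| ∧ |f x| < 2 ^ (k + 1)}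
  let F : ℤ → Set (En n) := fun k => {x | (2 : ℝ) ^ (k + 1) ≤ |f x|}
  have hSm : ∀ k, MeasurableSet (S k) := fun k =>
    (measurableSet_le measurable_const habs).inter (measurableSet_lt habs measurable_const)
  have hFm : ∀ k, MeasurableSet (F k) := fun k => measurableSet_le measurable_const habs
  have hSd : Pairwise (Function.onFun Disjoint S) := by
    intro j k hjk
    rw [Function.onFun, Set.disjoint_left]
    rintro x ⟨h1, h2⟩ ⟨h3, h4⟩
    have h5 := (zpow_lt_zpow_iff_right₀ (by norm_num : (1 : ℝ) < 2)).1 (h1.trans_lt h4)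
    have h6 := (zpow_lt_zpow_iff_right₀ (by norm_num : (1 : ℝ) < 2)).1 (h3.trans_lt h2)
    omega
  have hFfin : ∀ k, ν (F k) ≠ ∞ := by
    intro k
    refine ne_top_of_le_ne_top (withDensity_compact_ne_top hKt hvt hK hc) (measure_mono ?_)
    intro x hx
    apply subset_tsupport
    rw [Function.mem_support]
    intro h0
    have hx' : (2 : ℝ) ^ (k + 1) ≤ |f x| := hx
    rw [h0, abs_zero] at hx'
    exact absurd hx' (by positivity : (0 : ℝ) < 2 ^ (k + 1)).not_ge
  let b : ℤ → ℝ≥0∞ := fun k => ENNReal.ofReal (2 ^ (k + 2)) * ν (F k) ^ (1 / s)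
  have hlayer : ∀ k, σ * b k ≤
      4 * C * ENNReal.ofReal D * ∫⁻ y in S k, ‖fderiv ℝ f y‖ₑ * v y ^ (1 / s) := by
    intro k
    have h2k : (0 : ℝ) < 2 ^ (-k) := by positivity
    have hφ : ContDiff ℝ 1 (fun x => cutoff ((2 : ℝ) ^ (-k) * f x)) :=
      cutoff_contDiff.comp (contDiff_const.mul hf)
    have hφc : HasCompactSupport (fun x => cutoff ((2 : ℝ) ^ (-k) * f x)) :=
      hc.comp_left (g := fun u => cutoff ((2 : ℝ) ^ (-k) * u)) (by simp [cutoff_zero])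
    have hφF : ∀ x ∈ F k, 1 ≤ ‖cutoff ((2 : ℝ) ^ (-k) * f x)‖ₑ := by
      intro x hx
      have hx' : (2 : ℝ) ^ (k + 1) ≤ |f x| := hx
      rw [cutoff_eq_one]
      · simp
      · rw [abs_mul, abs_of_pos h2k]
        calc (2 : ℝ) = 2 ^ (-k) * 2 ^ (k + 1) := by
              rw [← zpow_add₀ two_ne_zero]; simp
          _ ≤ _ := by gcongr
    have hcap := capacity_bound hn hKt hvt hK hs _ hφ hφc (F k) (hFm k) (hFfin k) hφF
    have hgrad : ∫⁻ y, ‖fderiv ℝ (fun x => cutoff ((2 : ℝ) ^ (-k) * f x)) y‖ₑ * v y ^ (1 / s) ≤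
        ENNReal.ofReal D * ENNReal.ofReal ((2 : ℝ) ^ (-k)) *
          ∫⁻ y in S k, ‖fderiv ℝ f y‖ₑ * v y ^ (1 / s) := by
      rw [← lintegral_const_mul' _ _ (ENNReal.mul_ne_top ENNReal.ofReal_ne_top
        ENNReal.ofReal_ne_top), ← lintegral_indicator (hSm k)]
      refine lintegral_mono fun y => ?_
      refine (mul_le_mul_left (enorm_fderiv_truncation f hf hD k y) _).trans_eq ?_
      by_cases hy : y ∈ S k
      · rw [indicator_of_mem hy, indicator_of_mem (by exact hy), mul_assoc]
      · rw [indicator_of_notMem hy, indicator_of_notMem (by exact hy), zero_mul]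
    have hcoef : ENNReal.ofReal ((2 : ℝ) ^ (k + 2)) * ENNReal.ofReal ((2 : ℝ) ^ (-k)) = 4 := by
      rw [← ENNReal.ofReal_mul (by positivity), ← zpow_add₀ two_ne_zero]
      norm_num
    calc σ * b k = ENNReal.ofReal (2 ^ (k + 2)) * (σ * ν (F k) ^ (1 / s)) := by
          simp only [b]; ring
      _ ≤ ENNReal.ofReal (2 ^ (k + 2)) * (C * (ENNReal.ofReal D * ENNReal.ofReal ((2 : ℝ) ^ (-k)) *
          ∫⁻ y in S k, ‖fderiv ℝ f y‖ₑ * v y ^ (1 / s))) :=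
          mul_le_mul_right (hcap.trans (mul_le_mul_right hgrad _)) _
      _ = (ENNReal.ofReal ((2 : ℝ) ^ (k + 2)) * ENNReal.ofReal ((2 : ℝ) ^ (-k))) * C *
          ENNReal.ofReal D * ∫⁻ y in S k, ‖fderiv ℝ f y‖ₑ * v y ^ (1 / s) := by ring
      _ = _ := by rw [hcoef]
  have hsum : σ * ∑' k, b k ≤
      4 * C * ENNReal.ofReal D * ∫⁻ y, ‖fderiv ℝ f y‖ₑ * v y ^ (1 / s) := by
    calc σ * ∑' k, b k = ∑' k, σ * b k := ENNReal.tsum_mul_left.symm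
      _ ≤ ∑' k, 4 * C * ENNReal.ofReal D * ∫⁻ y in S k, ‖fderiv ℝ f y‖ₑ * v y ^ (1 / s) :=
          ENNReal.tsum_le_tsum hlayer
      _ = 4 * C * ENNReal.ofReal D * ∫⁻ y in ⋃ k, S k, ‖fderiv ℝ f y‖ₑ * v y ^ (1 / s) := by
          rw [ENNReal.tsum_mul_left, lintegral_iUnion hSm hSd]
      _ ≤ _ := by
          gcongr
          exact Measure.restrict_le_self
  refine le_trans ?_ hsum
  gcongr
  have hint : ∫⁻ x, ENNReal.ofReal (|f x| ^ s) * v x ≤ (∑' k, b k) ^ s := by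
    have hm : Measurable fun x => ENNReal.ofReal (|f x| ^ s) := by fun_prop
    have e1 : ∫⁻ x, ENNReal.ofReal (|f x| ^ s) * v x = ∫⁻ x, ENNReal.ofReal (|f x| ^ s) ∂ν := by
      rw [hν, lintegral_withDensity_eq_lintegral_mul₀ hvm hm.aemeasurable]
      exact lintegral_congr fun x => mul_comm _ _
    have e2 : ∫⁻ x, ENNReal.ofReal (|f x| ^ s) ∂ν =
        ∫⁻ x in ⋃ k, S k, ENNReal.ofReal (|f x| ^ s) ∂ν := by
      symm
      apply setLIntegral_eq_of_support_subset
      intro x hx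
      have hfx : f x ≠ 0 := by
        intro h0
        apply hx
        simp only [h0, abs_zero, Real.zero_rpow hspos.ne', ENNReal.ofReal_zero]
      obtain ⟨k, hk⟩ := exists_dyadic hfx
      exact mem_iUnion.2 ⟨k, hk⟩
    rw [e1, e2, lintegral_iUnion hSm hSd, ← (Equiv.addRight (1 : ℤ)).tsum_eq]
    refine le_trans (ENNReal.tsum_le_tsum fun k => ?_) (tsum_rpow_le_rpow_tsum b hs1.le)
    calc ∫⁻ x in S (k + 1), ENNReal.ofReal (|f x| ^ s) ∂ν
        ≤ ∫⁻ _ in S (k + 1), ENNReal.ofReal (2 ^ (k + 2)) ^ s ∂ν := by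
          refine setLIntegral_mono' (hSm _) fun x hx => ?_
          rw [ENNReal.ofReal_rpow_of_pos (by positivity)]
          refine ENNReal.ofReal_le_ofReal (Real.rpow_le_rpow (abs_nonneg _) ?_ hspos.le)
          have := hx.2.le
          rwa [add_assoc] at this
      _ = ENNReal.ofReal (2 ^ (k + 2)) ^ s * ν (S (k + 1)) := setLIntegral_const _ _
      _ ≤ ENNReal.ofReal (2 ^ (k + 2)) ^ s * ν (F k) := by
          gcongr
          exact fun x hx => hx.1
      _ = b k ^ s := by
          simp only [b]
          rw [ENNReal.mul_rpow_of_nonneg _ _ hspos.le, ← ENNReal.rpow_mul,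
            one_div_mul_cancel hspos.ne', ENNReal.rpow_one]
  calc _ ≤ ((∑' k, b k) ^ s) ^ (1 / s) := by gcongr
    _ = _ := by rw [← ENNReal.rpow_mul, mul_one_div_cancel hspos.ne', ENNReal.rpow_one]

/-! ### The endpoint estimate -/

/-- endpoint weak bound for `M_{n'}`:
`‖M_{n'}f‖_{L^{n',∞}(w^{n'} dx)} ≤ c [w]_{A_{1,n'}}^{2/n'} ‖w |∇f|‖_{L^1}`,
where `M_{n'}f = (M(|f|^{n'}))^{1/n'}` and `n' = n/(n-1)`. -/
theorem statement11 (n : ℕ) (hn : 2 ≤ n) :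
    ∃ c : ℝ, 0 < c ∧ ∀ w : En n → ℝ, (∀ x, 0 ≤ w x) → LocallyIntegrable w volume →
      A1C n ((n : ℝ) / (n - 1)) w < ∞ →
      ∀ f : En n → ℝ, ContDiff ℝ (⊤ : ℕ∞) f → HasCompactSupport f →
        wnormE ((n : ℝ) / (n - 1))
            (fun x => maximal n (fun y => ENNReal.ofReal (|f y| ^ ((n : ℝ) / (n - 1)))) x ^
              (((n : ℝ) - 1) / n))
            (volume.withDensity fun x => ENNReal.ofReal (w x) ^ ((n : ℝ) / (n - 1))) ≤
          ENNReal.ofReal c * A1C n ((n : ℝ) / (n - 1)) w ^ (2 * ((n : ℝ) - 1) / n) *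
            ∫⁻ x, ENNReal.ofReal (w x) * ENNReal.ofReal ‖fderiv ℝ f x‖ := by
  have hn1 : (0 : ℝ) < (n : ℝ) - 1 := by
    have : (2 : ℝ) ≤ n := by exact_mod_cast hn
    linarith
  have hn0 : (0 : ℝ) < n := by linarith
  obtain ⟨s, hs⟩ : ∃ s : ℝ, s = (n : ℝ) / (n - 1) := ⟨_, rfl⟩
  have hs1 : 1 < s := by rw [hs, lt_div_iff₀ hn1]; linarith
  have hspos : 0 < s := by linarith
  have hinv : ((n : ℝ) - 1) / n = 1 / s := by rw [hs, one_div_div]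
  have hexp : 2 * ((n : ℝ) - 1) / n = 1 / s + 1 / s := by rw [← hinv]; ring
  rw [hinv, hexp, ← hs]
  obtain ⟨D, hDpos, hD⟩ := exists_deriv_cutoff_bound
  have hne : Nonempty (Fin n) := ⟨⟨0, by omega⟩⟩
  set σ := (volume : Measure (En n)).toSphere univ with hσ
  have hσ0 : σ ≠ 0 := by
    rw [hσ, Measure.measure_univ_ne_zero]
    exact Measure.toSphere_ne_zero _
  have hσt : σ ≠ ∞ := measure_ne_top _ _
  -- the constant: weak type, Sobolev and Riesz factors collected
  set c : ℝ≥0∞ := σ⁻¹ * ((5 ^ n) ^ (1 / s) *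
    (4 * (ENNReal.ofReal n * (4 ^ n) ^ (1 / s)) * ENNReal.ofReal D)) with hcdef
  have h1s : 0 ≤ 1 / s := by positivity
  have hct : c ≠ ∞ := by
    have h5 : ((5 : ℝ≥0∞) ^ n) ^ (1 / s) ≠ ∞ := ENNReal.rpow_ne_top_of_nonneg h1s (by simp)
    have h4 : ((4 : ℝ≥0∞) ^ n) ^ (1 / s) ≠ ∞ := ENNReal.rpow_ne_top_of_nonneg h1s (by simp)
    exact ENNReal.mul_ne_top (ENNReal.inv_ne_top.2 hσ0) (ENNReal.mul_ne_top h5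
      (ENNReal.mul_ne_top (ENNReal.mul_ne_top (by simp)
        (ENNReal.mul_ne_top ENNReal.ofReal_ne_top h4)) ENNReal.ofReal_ne_top))
  refine ⟨c.toReal + 1, by positivity, fun w hw hwint hA f hf hfc => ?_⟩
  have hcle : c ≤ ENNReal.ofReal (c.toReal + 1) := by
    calc c = ENNReal.ofReal c.toReal := (ENNReal.ofReal_toReal hct).symm
      _ ≤ _ := ENNReal.ofReal_le_ofReal (by linarith)
  set K := A1C n s w
  set v : En n → ℝ≥0∞ := fun x => ENNReal.ofReal (w x) ^ s with hv
  have hK : IsA1 n K v := isA1_of_A1C n hspos.le w hA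
  have hvt : ∀ y, v y ≠ ∞ := fun y => ENNReal.rpow_ne_top_of_nonneg hspos.le ENNReal.ofReal_ne_top
  have hvm : AEMeasurable v :=
    (hwint.aestronglyMeasurable.aemeasurable.ennreal_ofReal).pow_const s
  have hf1 : ContDiff ℝ 1 f := hf.of_le (by exact_mod_cast le_top)
  have hvw : ∀ y, v y ^ (1 / s) = ENNReal.ofReal (w y) := fun y => by
    rw [hv, ← ENNReal.rpow_mul, mul_one_div_cancel hspos.ne', ENNReal.rpow_one]
  set J := ∫⁻ x, ENNReal.ofReal (w x) * ENNReal.ofReal ‖fderiv ℝ f x‖ with hJ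
  have hsob := weighted_sobolev hn hA.ne hvm hvt hK hs hD f hf1 hfc
  have hJ' : ∫⁻ y, ‖fderiv ℝ f y‖ₑ * v y ^ (1 / s) = J := by
    refine lintegral_congr fun y => ?_
    rw [hvw, ofReal_norm, mul_comm]
  rw [hJ', ENNReal.mul_rpow_of_nonneg _ _ h1s] at hsob
  set g : En n → ℝ≥0∞ := fun y => ENNReal.ofReal (|f y| ^ s) with hg
  have hfcont : Continuous f := hf1.continuous
  have hgm : Measurable g := by
    have := hfcont.measurable
    fun_prop
  have hgint : ∫⁻ x, g x ≠ ∞ := by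
    have hcs : HasCompactSupport fun y => |f y| ^ s :=
      hfc.comp_left (g := fun u => |u| ^ s) (by simp [Real.zero_rpow hspos.ne'])
    have hcont : Continuous fun y => |f y| ^ s :=
      hfcont.abs.rpow_const fun _ => Or.inr hspos.le
    exact (hcont.integrable_of_hasCompactSupport hcs).lintegral_lt_top.ne
  refine iSup₂_le fun t ht => ?_
  have hset : {x | ENNReal.ofReal t < maximal n g x ^ (1 / s)} =
      {x | ENNReal.ofReal t ^ s < maximal n g x} := by
    ext x
    simp only [mem_ofPred_eq]
    rw [one_div, ENNReal.lt_rpow_inv_iff hspos]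
  rw [hset]
  set X := (volume.withDensity v) {x | ENNReal.ofReal t ^ s < maximal n g x}
  have ht0 : ENNReal.ofReal t ≠ 0 := by simpa using ht
  have hweak : ENNReal.ofReal t ^ s * X ≤ 5 ^ n * K * ∫⁻ x, g x * v x :=
    weak_type_maximal (by omega) hK g hgm hgint
      (by simp [ENNReal.rpow_eq_zero_iff, ht0])
      (ENNReal.rpow_ne_top_of_nonneg hspos.le ENNReal.ofReal_ne_top)
  have hweak' : ENNReal.ofReal t * X ^ (1 / s) ≤
      (5 ^ n) ^ (1 / s) * K ^ (1 / s) * (∫⁻ x, g x * v x) ^ (1 / s) := by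
    have := ENNReal.rpow_le_rpow hweak h1s
    rwa [ENNReal.mul_rpow_of_nonneg _ _ h1s, ENNReal.mul_rpow_of_nonneg _ _ h1s,
      ENNReal.mul_rpow_of_nonneg _ _ h1s, ← ENNReal.rpow_mul, mul_one_div_cancel hspos.ne',
      ENNReal.rpow_one] at this
  calc ENNReal.ofReal t * X ^ (1 / s)
      ≤ (5 ^ n) ^ (1 / s) * K ^ (1 / s) * (∫⁻ x, g x * v x) ^ (1 / s) := hweak'
    _ = σ⁻¹ * ((5 ^ n) ^ (1 / s) * K ^ (1 / s)) * (σ * (∫⁻ x, g x * v x) ^ (1 / s)) := by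
        rw [mul_assoc σ⁻¹, mul_left_comm _ σ, ← mul_assoc σ⁻¹ σ, ENNReal.inv_mul_cancel hσ0 hσt,
          one_mul]
    _ ≤ σ⁻¹ * ((5 ^ n) ^ (1 / s) * K ^ (1 / s)) *
        (4 * (ENNReal.ofReal n * ((4 ^ n) ^ (1 / s) * K ^ (1 / s))) * ENNReal.ofReal D * J) :=
        mul_le_mul_right hsob _
    _ = c * K ^ (1 / s + 1 / s) * J := by
        rw [ENNReal.rpow_add_of_nonneg _ _ h1s h1s, hcdef]
        ring
    _ ≤ _ := by gcongr
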